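/- Let g be a finite-dimensional Lie algebra over ℂ with solvable radical r, and let α be an automorphism of g of finite order n (i.e. α^n = id and n is minimal) whose fixed-point subalgebra has dimension m. Then the derived length of r is at most (m + 1)·2^(n-1) + m. -/

import Mathlib

/-!
The proof grades `g` by the eigenspaces of `α` and combines Kreknin's theorem with a count of
fixed points along the derived series of the radical.

*Kreknin's theorem, relative to an ideal `J`.* Let `(F i)`, `i ∈ ℤ/n`, be submodules with
`⁅F i, F j⁆ ⊆ F (i + j)`, all containing `J`, with `F 0 ⊆ J`. Let `F'` be the graded derived family,
`F' i = J + ∑_{a + b = i} ⁅F a, F b⁆`. Then `2 ^ (n - 1) - 1` graded derivations bring `F` into `J`.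
This follows from `iterate_gradedDerived_le`: for each `k < n`, after `2 ^ k - 1` graded
derivations the family is contained in every bracket-closed family `C ⊇ J` such that `F c ⊆ C c`
for all `c > k` (residues being represented in `[0, n)`). The case `k = n - 1`, `C = J` is the
theorem. For the inductive step, put `κ = k + 1`, and let `C₀ j` consist of those `y ∈ F j` with
`⁅F (κ - j), y⁆ ⊆ C κ`. By the Jacobi identity `C₀` is bracket-closed. It contains `F κ`, because
`F 0 ⊆ J`, and it contains `F c` for `c > κ`, because then also `κ - c > κ` modulo `n`. So after
`2 ^ k - 1` derivations the family lies in `C₀`, and one more derivation puts its component of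
degree `κ` into `C κ`. The inductive hypothesis now applies to `C` itself and costs another
`2 ^ k - 1` derivations.

*Counting.* Let `D s` be the derived series of the radical `r` and `N = 2 ^ (n - 1)`. Each `D s` is
`α`-stable, hence the sum of its intersections with the eigenspaces of `α`. If the fixed points of
`D a` and `D (a + N)` coincide, Kreknin's theorem with `J = D (a + N)` gives
`D (a + N - 1) ≤ D (a + N)`, and since `r` is solvable, `D (a + N - 1) = 0`. Otherwise the dimension
of the space of fixed points drops strictly, which can happen at most `m` times. Hence
`D (m * N + N - 1) = 0`.
-/

open LieAlgebra

/-! ### Kreknin's theorem for graded families -/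

section Graded

variable {g : Type*} [LieRing g] [LieAlgebra ℂ g] {n : ℕ}

/-- A family of submodules indexed by `ℤ/n` with `⁅F i, F j⁆ ⊆ F (i + j)`. Neither independence of
the `F i` nor that they span `g` is required. -/
def BracketClosed (F : ZMod n → Submodule ℂ g) : Prop :=
  ∀ i j, ∀ x ∈ F i, ∀ y ∈ F j, ⁅x, y⁆ ∈ F (i + j)

/-- The graded derived family modulo the ideal `J`: its component of degree `i` is
`J + ∑_{a + b = i} ⁅F a, F b⁆`. -/
def gradedDerived (J : LieIdeal ℂ g) (F : ZMod n → Submodule ℂ g) (i : ZMod n) :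
    Submodule ℂ g :=
  J.toSubmodule ⊔ Submodule.span ℂ {z | ∃ a b, a + b = i ∧ ∃ x ∈ F a, ∃ y ∈ F b, ⁅x, y⁆ = z}

variable {J : LieIdeal ℂ g} {F : ZMod n → Submodule ℂ g}

lemma gradedDerived_le_iff {i : ZMod n} {S : Submodule ℂ g} (hJ : J.toSubmodule ≤ S) :
    gradedDerived J F i ≤ S ↔ ∀ a b, a + b = i → ∀ x ∈ F a, ∀ y ∈ F b, ⁅x, y⁆ ∈ S := by
  rw [gradedDerived, sup_le_iff, Submodule.span_le]
  constructor
  · rintro ⟨-, h⟩ a b hab x hx y hy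
    exact h ⟨a, b, hab, x, hx, y, hy, rfl⟩
  · intro h
    refine ⟨hJ, ?_⟩
    rintro _ ⟨a, b, hab, x, hx, y, hy, rfl⟩
    exact h a b hab x hx y hy

lemma lie_mem_gradedDerived {a b : ZMod n} {x y : g} (hx : x ∈ F a) (hy : y ∈ F b) :
    ⁅x, y⁆ ∈ gradedDerived J F (a + b) :=
  Submodule.mem_sup_right (Submodule.subset_span ⟨a, b, rfl, x, hx, y, hy, rfl⟩)

lemma gradedDerived_le (hF : BracketClosed F) (hJ : ∀ i, J.toSubmodule ≤ F i) (i : ZMod n) :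
    gradedDerived J F i ≤ F i := by
  rw [gradedDerived_le_iff (hJ i)]
  rintro a b rfl x hx y hy
  exact hF a b x hx y hy

lemma BracketClosed.gradedDerived (hF : BracketClosed F) (hJ : ∀ i, J.toSubmodule ≤ F i) :
    BracketClosed (gradedDerived J F) := fun i j _ hx _ hy =>
  lie_mem_gradedDerived (gradedDerived_le hF hJ i hx) (gradedDerived_le hF hJ j hy)

lemma iterate_gradedDerived (hF : BracketClosed F) (hJ : ∀ i, J.toSubmodule ≤ F i) (s : ℕ) :
    BracketClosed ((gradedDerived J)^[s] F) ∧
      ∀ i, J.toSubmodule ≤ (gradedDerived J)^[s] F i ∧ (gradedDerived J)^[s] F i ≤ F i := by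
  induction s with
  | zero => exact ⟨hF, fun i => ⟨hJ i, le_rfl⟩⟩
  | succ s ih =>
    obtain ⟨h1, h2⟩ := ih
    simp only [Function.iterate_succ_apply']
    exact ⟨h1.gradedDerived fun i => (h2 i).1, fun i => ⟨le_sup_left,
      (gradedDerived_le h1 (fun i => (h2 i).1) i).trans (h2 i).2⟩⟩

lemma zmod_lt_val_sub [NeZero n] {κ c : ZMod n} (h : κ.val < c.val) : κ.val < (κ - c).val := by
  have h1 : κ.val = (c.val + (κ - c).val) % n := by rw [← ZMod.val_add, add_sub_cancel]
  have h2 := ZMod.val_lt c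
  have h3 := ZMod.val_lt (κ - c)
  by_cases h4 : c.val + (κ - c).val < n
  · rw [Nat.mod_eq_of_lt h4] at h1
    omega
  · rw [Nat.mod_eq_sub_mod (by omega), Nat.mod_eq_of_lt (by omega)] at h1
    omega

/-- The inductive form of Kreknin's theorem. Taking for `C` the smallest bracket-closed
family containing `J` and the `F c` with `c > k` recovers the usual elimination of degrees. -/
theorem iterate_gradedDerived_le [NeZero n] (J : LieIdeal ℂ g) (k : ℕ) (hk : k < n) :
    ∀ F : ZMod n → Submodule ℂ g, BracketClosed F → (∀ i, J.toSubmodule ≤ F i) →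
      F 0 ≤ J.toSubmodule →
      ∀ C : ZMod n → Submodule ℂ g, BracketClosed C → (∀ i, J.toSubmodule ≤ C i) →
      (∀ c, k < c.val → F c ≤ C c) → ∀ i, (gradedDerived J)^[2 ^ k - 1] F i ≤ C i := by
  induction k with
  | zero =>
    intro F _ _ h0 C _ hJC hFC i
    rcases eq_or_ne i 0 with rfl | hi
    · exact h0.trans (hJC 0)
    · exact hFC i (Nat.pos_of_ne_zero fun h => hi ((ZMod.val_eq_zero i).1 h))
  | succ k ih =>
    intro F hF hJF h0 C hC hJC hFC i
    have ih := ih (by omega)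
    set κ : ZMod n := ((k + 1 : ℕ) : ZMod n) with hκ
    have hκv : κ.val = k + 1 := ZMod.val_natCast_of_lt hk
    -- The elements of `F j` whose brackets with the complementary degree land in `C κ`.
    let C₀ : ZMod n → Submodule ℂ g := fun j =>
      { carrier := {y | y ∈ F j ∧ ∀ x ∈ F (κ - j), ⁅x, y⁆ ∈ C κ}
        add_mem' := fun {y z} hy hz => ⟨add_mem hy.1 hz.1, fun x hx => by
          rw [lie_add]; exact add_mem (hy.2 x hx) (hz.2 x hx)⟩
        zero_mem' := ⟨zero_mem _, fun x _ => by rw [lie_zero]; exact zero_mem _⟩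
        smul_mem' := fun t y hy => ⟨Submodule.smul_mem _ t hy.1, fun x hx => by
          rw [lie_smul]; exact Submodule.smul_mem _ t (hy.2 x hx)⟩ }
    have hC₀ : BracketClosed C₀ := by
      rintro i j y ⟨hy, hy'⟩ z ⟨hz, hz'⟩
      refine ⟨hF i j y hy z hz, fun x hx => ?_⟩
      have hxy : ⁅x, y⁆ ∈ F (κ - j) := by
        have := hF _ _ x hx y hy
        rwa [show κ - (i + j) + i = κ - j by ring] at this
      have hxz : ⁅x, z⁆ ∈ F (κ - i) := by
        have := hF _ _ x hx z hz
        rwa [show κ - (i + j) + j = κ - i by ring] at this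
      rw [leibniz_lie x y z, ← lie_skew y]
      exact add_mem (hz' _ hxy) (neg_mem (hy' _ hxz))
    have hJC₀ : ∀ i, J.toSubmodule ≤ C₀ i := fun i y hy =>
      ⟨hJF i hy, fun x _ => hJC κ (J.lie_mem hy)⟩
    have hFC₀ : ∀ c, k < c.val → F c ≤ C₀ c := by
      intro c hc y hy
      refine ⟨hy, fun x hx => ?_⟩
      rcases eq_or_ne c κ with rfl | hcκ
      · rw [sub_self] at hx
        exact hJC _ (lie_mem_left ℂ g J x y (h0 hx))
      · have hc' : κ.val < c.val := by
          have : c.val ≠ κ.val := fun h => hcκ (ZMod.val_injective n h)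
          omega
        have hd := zmod_lt_val_sub hc'
        have := hC _ _ x (hFC _ (hκv ▸ hd) hx) y (hFC c (hκv ▸ hc') hy)
        rwa [sub_add_cancel] at this
    have hM := ih F hF hJF h0 C₀ hC₀ hJC₀ hFC₀
    obtain ⟨-, hMF⟩ := iterate_gradedDerived hF hJF (2 ^ k - 1)
    have hpos : 0 < 2 ^ k := by positivity
    obtain ⟨hN, hNF⟩ := iterate_gradedDerived hF hJF (2 ^ k)
    have hNκ : (gradedDerived J)^[2 ^ k] F κ ≤ C κ := by
      rw [show 2 ^ k = (2 ^ k - 1) + 1 by omega, Function.iterate_succ_apply',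
        gradedDerived_le_iff (hJC κ)]
      intro a b hab x hx y hy
      refine (hM b hy).2 x ?_
      rw [← hab, add_sub_cancel_right]
      exact (hMF a).2 hx
    have := ih _ hN (fun i => (hNF i).1) ((hNF 0).2.trans h0) C hC hJC (fun c hc => by
      rcases eq_or_ne c κ with rfl | hcκ
      · exact hNκ
      · have : c.val ≠ κ.val := fun h => hcκ (ZMod.val_injective n h)
        exact (hNF c).2.trans (hFC c (by omega))) i
    rwa [← Function.iterate_add_apply,
      show 2 ^ k - 1 + 2 ^ k = 2 ^ (k + 1) - 1 by rw [pow_succ]; omega] at this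

/-- **Kreknin's theorem** relative to the ideal `J`, for an ideal `I` contained in the sum of a graded
family `F`: the graded derived family dominates the derived series. -/
theorem derivedSeriesOfIdeal_le_of_graded [NeZero n] (I J : LieIdeal ℂ g)
    (F : ZMod n → Submodule ℂ g) (hF : BracketClosed F) (hJF : ∀ i, J.toSubmodule ≤ F i)
    (h0 : F 0 ≤ J.toSubmodule) (hI : I.toSubmodule ≤ ⨆ i, F i) :
    derivedSeriesOfIdeal ℂ g (2 ^ (n - 1) - 1) I ≤ J := by
  have hs : ∀ s, (derivedSeriesOfIdeal ℂ g s I).toSubmodule ≤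
      ⨆ i, (gradedDerived J)^[s] F i := by
    intro s
    induction s with
    | zero => exact hI
    | succ s ih =>
      rw [derivedSeriesOfIdeal_succ, LieSubmodule.lieIdeal_oper_eq_linear_span',
        Submodule.span_le]
      rintro _ ⟨x, hx, y, hy, rfl⟩
      simp only [Function.iterate_succ_apply']
      have hx' := ih hx
      have hy' := ih hy
      clear hx hy
      induction hx' using Submodule.iSup_induction' with
      | zero => rw [zero_lie]; exact zero_mem _
      | add x₁ x₂ _ _ h₁ h₂ => rw [add_lie]; exact add_mem h₁ h₂
      | mem a x hx =>
        induction hy' using Submodule.iSup_induction' with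
        | zero => rw [lie_zero]; exact zero_mem _
        | add y₁ y₂ _ _ h₁ h₂ => rw [lie_add]; exact add_mem h₁ h₂
        | mem b y hy =>
          exact Submodule.mem_iSup_of_mem (a + b) (lie_mem_gradedDerived hx hy)
  have hn : 0 < n := Nat.pos_of_ne_zero (NeZero.ne n)
  refine (hs _).trans (iSup_le ?_)
  refine iterate_gradedDerived_le J (n - 1) (by omega) F hF hJF h0 (fun _ => J.toSubmodule)
    (fun _ _ x _ y hy => J.lie_mem hy) (fun _ => le_rfl) fun c hc => ?_
  have := ZMod.val_lt c
  omega

end Graded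

/-! ### Eigenspace gradings and stable ideals -/

section Automorphism

variable {g : Type*} [LieRing g] [LieAlgebra ℂ g]

/-- A stable submodule is the sum of its intersections with the eigenspaces: `X ^ n - 1` is
separable, so `f` is semisimple, and its eigenvalues are powers of `ζ`. -/
lemma le_iSup_inf_eigenspace [FiniteDimensional ℂ g] {n : ℕ} [NeZero n] {ζ : ℂ} (hζ : IsPrimitiveRoot ζ n)
    (f : Module.End ℂ g) (hf : f ^ n = 1) (p : Submodule ℂ g) (hp : ∀ x ∈ p, f x ∈ p) :
    p ≤ ⨆ i : ZMod n, p ⊓ f.eigenspace (ζ ^ i.val) := by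
  have hss : f.IsSemisimple := by
    refine Module.End.isSemisimple_of_squarefree_aeval_eq_zero
      (p := (Polynomial.X ^ n - 1 : Polynomial ℂ)) ?_ (by simp [hf])
    exact (Polynomial.X_pow_sub_one_separable_iff.2
      (by exact_mod_cast NeZero.ne n)).squarefree
  have htop : ⨆ μ, f.genEigenspace μ 1 = ⊤ := hss.iSup_eigenspace_eq_top
  refine (Submodule.eq_iSup_inf_genEigenspace 1 hp htop).le.trans (iSup_le fun μ => ?_)
  intro x hx
  rcases eq_or_ne x 0 with rfl | hx0
  · exact zero_mem _
  have hfx : f x = μ • x := Module.End.mem_eigenspace_iff.1 hx.2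
  have hpow : ∀ k : ℕ, (f ^ k) x = μ ^ k • x := by
    intro k
    induction k with
    | zero => simp
    | succ k ih => rw [pow_succ', Module.End.mul_apply, ih, map_smul, hfx, smul_smul, pow_succ]
  have hμ : μ ^ n = 1 := by
    have := hpow n
    rw [hf, Module.End.one_apply] at this
    have h2 : (μ ^ n - 1) • x = 0 := by rw [sub_smul, one_smul, ← this, sub_self]
    exact sub_eq_zero.1 ((smul_eq_zero.1 h2).resolve_right hx0)
  obtain ⟨i, hi, rfl⟩ := hζ.eq_pow_of_pow_eq_one hμ
  refine Submodule.mem_iSup_of_mem (i : ZMod n) ?_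
  rw [ZMod.val_natCast_of_lt hi]
  exact hx

lemma map_mem_derivedSeriesOfIdeal (α : g ≃ₗ⁅ℂ⁆ g) (I : LieIdeal ℂ g) (hI : ∀ x ∈ I, α x ∈ I)
    (s : ℕ) : ∀ x ∈ derivedSeriesOfIdeal ℂ g s I, α x ∈ derivedSeriesOfIdeal ℂ g s I := by
  induction s with
  | zero => exact hI
  | succ s ih =>
    have : derivedSeriesOfIdeal ℂ g (s + 1) I ≤
        (derivedSeriesOfIdeal ℂ g (s + 1) I).comap α.toLieHom := by
      conv_lhs => rw [derivedSeriesOfIdeal_succ]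
      rw [LieSubmodule.lie_le_iff]
      intro x hx y hy
      rw [LieIdeal.mem_comap, LieHom.map_lie, derivedSeriesOfIdeal_succ]
      exact LieSubmodule.lie_mem_lie (ih x hx) (ih y hy)
    exact fun x hx => this hx

/-- The radical is stable under automorphisms, being the largest solvable ideal. -/
lemma map_mem_radical [FiniteDimensional ℂ g] (α : g ≃ₗ⁅ℂ⁆ g) (x : g) (hx : x ∈ radical ℂ g) :
    α x ∈ radical ℂ g := by
  let K : LieIdeal ℂ g := (radical ℂ g).comap α.symm.toLieHom
  let φ : K →ₗ⁅ℂ⁆ radical ℂ g :=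
    { toFun := fun y => ⟨α.symm y, y.2⟩
      map_add' := fun y z => Subtype.ext (map_add α.symm (y : g) z)
      map_smul' := fun c y => Subtype.ext (map_smul α.symm c (y : g))
      map_lie' := fun {y z} => Subtype.ext (LieEquiv.map_lie α.symm (y : g) z) }
  have hφ : Function.Injective φ := fun y z h =>
    Subtype.ext (α.symm.injective (congrArg Subtype.val h))
  have hK : IsSolvable K := hφ.lieAlgebra_isSolvable
  refine (LieIdeal.solvable_iff_le_radical ℂ g K).1 hK ?_
  change α.symm (α x) ∈ radical ℂ g
  rwa [LieEquiv.symm_apply_apply]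

/-- Kreknin's theorem for an `α`-stable ideal `I` whose fixed points all lie in the ideal `J`. -/
theorem derivedSeriesOfIdeal_le_of_fixed_le [FiniteDimensional ℂ g] {n : ℕ} [NeZero n]
    (α : g ≃ₗ⁅ℂ⁆ g)
    (hα : (α.toLinearEquiv : g →ₗ[ℂ] g) ^ n = 1) (I J : LieIdeal ℂ g) (hI : ∀ x ∈ I, α x ∈ I)
    (hfix : ∀ x ∈ I, α x = x → x ∈ J) :
    derivedSeriesOfIdeal ℂ g (2 ^ (n - 1) - 1) I ≤ J := by
  have hζ := Complex.isPrimitiveRoot_exp n (NeZero.ne n)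
  set ζ := Complex.exp (2 * Real.pi * Complex.I / n)
  set f : Module.End ℂ g := (α.toLinearEquiv : g →ₗ[ℂ] g) with hf
  have hmem : ∀ {μ : ℂ} {x : g}, x ∈ f.eigenspace μ ↔ α x = μ • x :=
    Module.End.mem_eigenspace_iff
  refine derivedSeriesOfIdeal_le_of_graded (n := n) I J
    (fun i => J.toSubmodule ⊔ (I.toSubmodule ⊓ f.eigenspace (ζ ^ i.val))) ?_
    (fun _ => le_sup_left) ?_ ?_
  · intro i j x hx y hy
    obtain ⟨x₁, hx₁, x₂, ⟨hx₂, hx₃⟩, rfl⟩ := Submodule.mem_sup.1 hx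
    obtain ⟨y₁, hy₁, y₂, ⟨hy₂, hy₃⟩, rfl⟩ := Submodule.mem_sup.1 hy
    rw [lie_add, add_lie x₁ x₂ y₂, ← add_assoc]
    refine add_mem (add_mem ?_ ?_) ?_
    · exact Submodule.mem_sup_left (J.lie_mem hy₁)
    · exact Submodule.mem_sup_left (lie_mem_left ℂ g J _ _ hx₁)
    · refine Submodule.mem_sup_right ⟨I.lie_mem hy₂, ?_⟩
      rw [SetLike.mem_coe, hmem] at hx₃ hy₃ ⊢
      rw [LieEquiv.map_lie, hx₃, hy₃, smul_lie, lie_smul, smul_smul, ← pow_add, ZMod.val_add,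
        pow_eq_pow_mod (i.val + j.val) hζ.pow_eq_one]
  · refine sup_le le_rfl ?_
    rintro x ⟨hx, hx'⟩
    rw [SetLike.mem_coe, hmem, ZMod.val_zero, pow_zero, one_smul] at hx'
    exact hfix x hx hx'
  · exact (le_iSup_inf_eigenspace hζ f hα I.toSubmodule hI).trans
      (iSup_mono fun i => le_sup_right)

end Automorphism

/-- Let `g` be a finite-dimensional Lie algebra over `ℂ` with solvable radical `r`, and let
`α` be an automorphism of `g` of finite order `n` whose fixed-point subalgebra has
dimension `m`. Then the derived length of `r` is at most `(m + 1) * 2 ^ (n - 1) + m`. -/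
theorem derivedLength_radical_le_kreknin_bound
    (g : Type*) [LieRing g] [LieAlgebra ℂ g] [FiniteDimensional ℂ g]
    (α : g ≃ₗ⁅ℂ⁆ g) (n m : ℕ) (hn : 0 < n)
    (hord : orderOf α.toLinearEquiv = n)
    (hfix : Module.finrank ℂ ↥(Module.End.eigenspace (α.toLinearEquiv : g →ₗ[ℂ] g) 1) = m) :
    LieAlgebra.derivedSeries ℂ ↥(LieAlgebra.radical ℂ g) ((m + 1) * 2 ^ (n - 1) + m) = ⊥ := by
  have : NeZero n := ⟨hn.ne'⟩
  set f : Module.End ℂ g := (α.toLinearEquiv : g →ₗ[ℂ] g) with hf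
  have hα : f ^ n = 1 := by
    have h := pow_orderOf_eq_one α.toLinearEquiv
    rw [hord] at h
    have h2 := congrArg (LinearEquiv.automorphismGroup.toLinearMapMonoidHom (R := ℂ) (M := g)) h
    rw [map_pow, map_one] at h2
    exact h2
  rw [LieIdeal.derivedSeries_eq_bot_iff]
  set D : ℕ → LieIdeal ℂ g := fun s => derivedSeriesOfIdeal ℂ g s (radical ℂ g) with hD
  have hanti : ∀ {s t : ℕ}, s ≤ t → D t ≤ D s := fun h => derivedSeriesOfIdeal_antitone _ h
  have hstab : ∀ s, ∀ x ∈ D s, α x ∈ D s :=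
    map_mem_derivedSeriesOfIdeal α (radical ℂ g) (map_mem_radical α)
  obtain ⟨d, hd⟩ : ∃ d, D d = ⊥ := by
    obtain ⟨d, hd⟩ := IsSolvable.solvable (R := ℂ) (L := radical ℂ g)
    exact ⟨d, (LieIdeal.derivedSeries_eq_bot_iff _ d).1 hd⟩
  have hstat : ∀ s, D s ≤ D (s + 1) → D s = ⊥ := by
    intro s hs
    have h : ∀ t, D s ≤ D (s + t) := by
      intro t
      induction t with
      | zero => exact le_rfl
      | succ t ih =>
        have := derivedSeriesOfIdeal_mono ih 1
        simp only [hD, ← derivedSeriesOfIdeal_add] at this hs ⊢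
        rw [add_comm 1 s, add_comm 1 (s + t)] at this
        exact hs.trans this
    exact le_bot_iff.1 ((h d).trans ((hanti (Nat.le_add_left d s)).trans hd.le))
  let Φ : ℕ → Submodule ℂ g := fun s => (D s).toSubmodule ⊓ f.eigenspace 1
  have hstep : ∀ a, D (a + (2 ^ (n - 1) - 1)) = ⊥ ∨
      Module.finrank ℂ (Φ (a + 2 ^ (n - 1))) < Module.finrank ℂ (Φ a) := by
    intro a
    have hle : Φ (a + 2 ^ (n - 1)) ≤ Φ a :=
      inf_le_inf_right _ (hanti (Nat.le_add_right _ _))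
    rcases hle.eq_or_lt with heq | hlt
    · left
      have hK := derivedSeriesOfIdeal_le_of_fixed_le α hα (D a) (D (a + 2 ^ (n - 1)))
        (hstab a) (fun x hx hx' => by
          have : x ∈ Φ a := ⟨hx, Module.End.mem_eigenspace_iff.2 (by rw [one_smul]; exact hx')⟩
          exact (heq ▸ this).1)
      apply hstat
      have hpos : 0 < 2 ^ (n - 1) := by positivity
      rw [show a + (2 ^ (n - 1) - 1) + 1 = a + 2 ^ (n - 1) by omega]
      simpa only [hD, ← derivedSeriesOfIdeal_add, add_comm (2 ^ (n - 1) - 1) a] using hK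
    · exact Or.inr (Submodule.finrank_lt_finrank_of_lt hlt)
  have hcount : ∀ j, D (j * 2 ^ (n - 1) + (2 ^ (n - 1) - 1)) = ⊥ ∨
      Module.finrank ℂ (Φ ((j + 1) * 2 ^ (n - 1))) + (j + 1) ≤ m := by
    intro j
    induction j with
    | zero =>
      have h0 : Module.finrank ℂ (Φ 0) ≤ m := hfix ▸ Submodule.finrank_mono inf_le_right
      refine (hstep 0).imp (fun h => by simpa using h) fun h => ?_
      rw [zero_add] at h
      rw [zero_add, one_mul]
      omega
    | succ j ih =>
      rcases ih with h | h
      · refine Or.inl (le_bot_iff.1 ((hanti ?_).trans h.le))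
        gcongr
        omega
      · refine (hstep ((j + 1) * 2 ^ (n - 1))).imp_right fun h' => ?_
        rw [add_mul (j + 1) 1, one_mul]
        omega
  rcases hcount m with h | h
  · refine le_bot_iff.1 ((hanti ?_).trans h.le)
    rw [add_mul, one_mul]
    generalize 2 ^ (n - 1) = N
    omega
  · omega
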